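/- Let θ̂ ~ N(0, I₂), a₁, a₂ > 0 with a₁² + a₂² = 1, b ≤ 0, z = z_{1−α/2}. Define LB(θ₂) = max(a₁a₂⁻¹(θ₂ + a₂⁻¹b) − a₂⁻¹z, −z) and UB(θ₂) = max(a₁a₂⁻¹(θ₂ + a₂⁻¹b) + a₂⁻¹z, z). Then P(LB(θ̂₂) ≤ θ̂₁ ≤ UB(θ̂₂)) ≥ 1 − α, with equality when b = 0. -/

import Mathlib

open MeasureTheory ProbabilityTheory

/-- Standard normal CDF. -/
noncomputable def stdNormalCDF (t : ℝ) : ℝ :=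
  ((gaussianReal 0 1) (Set.Iic t)).toReal

/-- The standard Gaussian measure on the plane. -/
noncomputable abbrev stdGaussianPlane : Measure (ℝ × ℝ) :=
  (gaussianReal 0 1).prod (gaussianReal 0 1)

lemma stdGaussianPlane_apply {S : Set (ℝ × ℝ)} (hS : MeasurableSet S) :
    stdGaussianPlane S = ∫⁻ w in S, gaussianPDF 0 1 w.1 * gaussianPDF 0 1 w.2 := by
  rw [stdGaussianPlane, gaussianReal_of_var_ne_zero 0 one_ne_zero,
    prod_withDensity (measurable_gaussianPDF 0 1) (measurable_gaussianPDF 0 1),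
    withDensity_apply _ hS, Measure.volume_eq_prod]

lemma gaussianPDF_mul_le {x y x' y' : ℝ} (h : x' ^ 2 + y' ^ 2 ≤ x ^ 2 + y ^ 2) :
    gaussianPDF 0 1 x * gaussianPDF 0 1 y ≤ gaussianPDF 0 1 x' * gaussianPDF 0 1 y' := by
  simp only [gaussianPDF, ← ENNReal.ofReal_mul (gaussianPDFReal_nonneg 0 1 _)]
  apply ENNReal.ofReal_le_ofReal
  simp only [gaussianPDFReal, sub_zero, NNReal.coe_one, mul_one]
  rw [mul_mul_mul_comm, mul_mul_mul_comm _ (Real.exp (-x' ^ 2 / 2)), ← Real.exp_add,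
    ← Real.exp_add]
  gcongr ?_ * Real.exp ?_
  linarith

/-- A volume-preserving map that moves the points of `T ⁻¹' S` closer to the origin
can only increase Gaussian measure. -/
lemma stdGaussianPlane_preimage_le {T : ℝ × ℝ → ℝ × ℝ} (hT : MeasurePreserving T)
    {S : Set (ℝ × ℝ)} (hS : MeasurableSet S)
    (h : ∀ w ∈ T ⁻¹' S, (T w).1 ^ 2 + (T w).2 ^ 2 ≤ w.1 ^ 2 + w.2 ^ 2) :
    stdGaussianPlane.real (T ⁻¹' S) ≤ stdGaussianPlane.real S := by
  refine ENNReal.toReal_mono (measure_ne_top _ _) ?_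
  have hφ : Measurable fun w : ℝ × ℝ => gaussianPDF 0 1 w.1 * gaussianPDF 0 1 w.2 :=
    ((measurable_gaussianPDF 0 1).comp measurable_fst).mul
      ((measurable_gaussianPDF 0 1).comp measurable_snd)
  rw [stdGaussianPlane_apply hS, stdGaussianPlane_apply (hT.measurable hS),
    ← hT.setLIntegral_comp_preimage hS hφ]
  exact setLIntegral_mono (hφ.comp hT.measurable) fun w hw => gaussianPDF_mul_le (h w hw)

lemma stdGaussianPlane_preimage_eq {T : ℝ × ℝ → ℝ × ℝ} (hT : MeasurePreserving T)
    (hinv : Function.Involutive T)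
    (h : ∀ w, (T w).1 ^ 2 + (T w).2 ^ 2 = w.1 ^ 2 + w.2 ^ 2)
    {S : Set (ℝ × ℝ)} (hS : MeasurableSet S) :
    stdGaussianPlane.real (T ⁻¹' S) = stdGaussianPlane.real S := by
  refine le_antisymm (stdGaussianPlane_preimage_le hT hS fun w _ => (h w).le) ?_
  have := stdGaussianPlane_preimage_le hT (hT.measurable hS) fun w _ => (h w).le
  rwa [← Set.preimage_comp, hinv.comp_self, Set.preimage_id] at this

lemma LinearMap.measurePreserving_of_involutive (T : ℝ × ℝ →ₗ[ℝ] ℝ × ℝ)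
    (hT : Function.Involutive T) : MeasurePreserving T := by
  have hdet : LinearMap.det T * LinearMap.det T = 1 := by
    rw [← LinearMap.det_comp, ← LinearMap.det_id (M := ℝ × ℝ) (A := ℝ)]
    congr 1
    exact LinearMap.ext hT
  have habs : |(LinearMap.det T)⁻¹| = 1 := by
    rcases mul_self_eq_one_iff.mp hdet with h | h <;> simp [h]
  refine ⟨T.continuous_of_finiteDimensional.measurable, ?_⟩
  rw [Measure.map_linearMap_addHaar_eq_smul_addHaar _ (left_ne_zero_of_mul_eq_one hdet), habs]
  simp

/-- The reflection exchanging the linear forms `x` and `d * x - a * y`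
when `a ^ 2 + d ^ 2 = 1`. -/
def exchangeReflection (a d : ℝ) : ℝ × ℝ →ₗ[ℝ] ℝ × ℝ where
  toFun w := (d * w.1 - a * w.2, -(a * w.1) - d * w.2)
  map_add' v w := by ext <;> simp <;> ring
  map_smul' c w := by ext <;> simp <;> ring

lemma stdNormalCDF_eq_measure_halfPlane (z : ℝ) :
    stdNormalCDF z = stdGaussianPlane.real {w | w.1 ≤ z} := by
  have : {w : ℝ × ℝ | w.1 ≤ z} = Set.Iic z ×ˢ Set.univ := by ext; simp
  rw [this, measureReal_prod_prod]
  simp [stdNormalCDF, Measure.real]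

lemma nonneg_of_half_le_stdNormalCDF {z : ℝ} (h : 1 / 2 ≤ stdNormalCDF z) : 0 ≤ z := by
  by_contra! hz
  have hneg : (gaussianReal 0 1).real (Set.Ici (-z)) = (gaussianReal 0 1).real (Set.Iic z) := by
    have hmap : (gaussianReal 0 1).map (fun x : ℝ => -x) = gaussianReal 0 1 := by
      simpa using gaussianReal_map_neg (μ := 0) (v := 1)
    conv_lhs => rw [← hmap]
    rw [map_measureReal_apply measurable_neg measurableSet_Ici]
    congr 1
    ext x
    simp
  have hpos : 0 < (gaussianReal 0 1).real (Set.Ioo z (-z)) := by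
    refine ENNReal.toReal_pos (fun h0 => ?_) (measure_ne_top _ _)
    have := gaussianReal_absolutelyContinuous' 0 (one_ne_zero (α := NNReal)) h0
    simp only [Real.volume_Ioo, ENNReal.ofReal_eq_zero] at this
    linarith
  have hdisj : (gaussianReal 0 1).real (Set.Iic z ∪ Set.Ioo z (-z) ∪ Set.Ici (-z)) ≤ 1 :=
    measureReal_le_one
  rw [measureReal_union _ measurableSet_Ici, measureReal_union _ measurableSet_Ioo, hneg] at hdisj
  · change 1 / 2 ≤ (gaussianReal 0 1).real (Set.Iic z) at h
    linarith
  · rw [Set.disjoint_left]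
    intro x hx hx'
    exact not_lt_of_ge hx hx'.1
  · rw [Set.disjoint_left]
    rintro x (hx | hx) hx'
    · simp only [Set.mem_Iic, Set.mem_Ici] at hx hx'
      linarith
    · exact not_lt_of_ge hx' hx.2

lemma stdGaussianPlane_add {A B C : Set (ℝ × ℝ)} (hC : MeasurableSet C)
    (h : ∀ w, w ∈ A ↔ w ∈ B ∨ w ∈ C) (hBC : ∀ w ∈ B, w ∉ C) :
    stdGaussianPlane.real A = stdGaussianPlane.real B + stdGaussianPlane.real C := by
  rw [← measureReal_union (Set.disjoint_left.mpr hBC) hC]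
  exact congrArg _ (Set.ext h)

lemma stdGaussianPlane_neg {S : Set (ℝ × ℝ)} (hS : MeasurableSet S) :
    stdGaussianPlane.real {w | -w ∈ S} = stdGaussianPlane.real S :=
  stdGaussianPlane_preimage_eq (T := fun w => -w) (Measure.measurePreserving_neg volume)
    neg_involutive (fun w => by simp) hS

section

variable {a d : ℝ}

lemma exchangeReflection_involutive (h : a ^ 2 + d ^ 2 = 1) :
    Function.Involutive (exchangeReflection a d) := by
  intro w
  ext
  · simp only [exchangeReflection, LinearMap.coe_mk, AddHom.coe_mk]
    linear_combination w.1 * h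
  · simp only [exchangeReflection, LinearMap.coe_mk, AddHom.coe_mk]
    linear_combination w.2 * h

lemma stdGaussianPlane_exchange (h : a ^ 2 + d ^ 2 = 1) {S : Set (ℝ × ℝ)}
    (hS : MeasurableSet S) :
    stdGaussianPlane.real {w | exchangeReflection a d w ∈ S} = stdGaussianPlane.real S := by
  refine stdGaussianPlane_preimage_eq
    (LinearMap.measurePreserving_of_involutive _ (exchangeReflection_involutive h))
    (exchangeReflection_involutive h) (fun w => ?_) hS
  simp only [exchangeReflection, LinearMap.coe_mk, AddHom.coe_mk]
  linear_combination (w.1 ^ 2 + w.2 ^ 2) * h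

lemma exchangeReflection_fst (w : ℝ × ℝ) :
    (exchangeReflection a d w).1 = d * w.1 - a * w.2 := rfl

lemma exchangeReflection_form (h : a ^ 2 + d ^ 2 = 1) (w : ℝ × ℝ) :
    d * (exchangeReflection a d w).1 - a * (exchangeReflection a d w).2 = w.1 :=
  congrArg Prod.fst (exchangeReflection_involutive h w)

lemma stdGaussianPlane_line (h : a ^ 2 + d ^ 2 = 1) (k : ℝ) :
    stdGaussianPlane.real {w | d * w.1 - a * w.2 = k} = 0 := by
  have h1 := stdGaussianPlane_exchange h (S := {w | w.1 = k})
    (measurableSet_eq_fun measurable_fst measurable_const)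
  have h2 : {w : ℝ × ℝ | w.1 = k} = {k} ×ˢ Set.univ := by ext; simp
  have : NullSingletonClass (gaussianReal 0 1) := nullSingletonClass_gaussianReal one_ne_zero
  have h3 : stdGaussianPlane.real {w : ℝ × ℝ | w.1 = k} = 0 := by
    rw [h2, measureReal_prod_prod]
    simp [Measure.real]
  rw [h3] at h1
  exact h1

/-- Point reflection through the point where both linear forms equal `k ≤ 0`. -/
lemma stdGaussianPlane_quadrant_strip_le (ha : 0 < a) (hd : 0 < d) (h : a ^ 2 + d ^ 2 = 1)
    {k δ : ℝ} (hk : k ≤ 0) :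
    stdGaussianPlane.real
        {w | w.1 < k - δ ∧ k ≤ d * w.1 - a * w.2 ∧ d * w.1 - a * w.2 < k + δ} ≤
      stdGaussianPlane.real
        {w | k + δ ≤ w.1 ∧ k - δ ≤ d * w.1 - a * w.2 ∧ d * w.1 - a * w.2 < k} := by
  set y₀ := -k * (1 - d) / a with hy₀
  have hay : a * y₀ = -k * (1 - d) := by rw [hy₀]; field_simp
  set T : ℝ × ℝ → ℝ × ℝ := fun w => (2 * k, 2 * y₀) - w with hTdef
  have hT : MeasurePreserving T := Measure.measurePreserving_sub_left volume _
  have hT1 (w) : (T w).1 = 2 * k - w.1 := rfl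
  have hT2 (w) : (T w).2 = 2 * y₀ - w.2 := rfl
  set S : Set (ℝ × ℝ) := {w | k + δ < w.1 ∧ k - δ < d * w.1 - a * w.2 ∧
    d * w.1 - a * w.2 ≤ k} with hS
  have hmeas : MeasurableSet S := by rw [hS]; measurability
  have hpre : {w : ℝ × ℝ | w.1 < k - δ ∧ k ≤ d * w.1 - a * w.2 ∧
      d * w.1 - a * w.2 < k + δ} = T ⁻¹' S := by
    ext w
    simp only [hS, Set.mem_preimage, Set.mem_ofPred_eq, hT1, hT2]
    constructor <;> rintro ⟨h1, h2, h3⟩ <;> refine ⟨?_, ?_, ?_⟩ <;> linarith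
  have hle := stdGaussianPlane_preimage_le hT hmeas (fun w hw => by
    rw [← hpre] at hw
    obtain ⟨h1, h2, h3⟩ := hw
    rw [hT1, hT2]
    have hkey : (w.1 ^ 2 + w.2 ^ 2 - ((2 * k - w.1) ^ 2 + (2 * y₀ - w.2) ^ 2)) * (1 + d) =
        4 * -k * ((k - w.1) - (d * w.1 - a * w.2 - k)) := by
      have hya : y₀ * (1 + d) = -k * a := by
        apply mul_left_cancel₀ ha.ne'
        linear_combination (1 + d) * hay + (-k) * (- h)
      have hyy : y₀ ^ 2 * (1 + d) = k ^ 2 * (1 - d) := by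
        linear_combination y₀ * hya - k * hay
      linear_combination 4 * w.2 * hya - 4 * hyy
    have : 0 ≤ 4 * -k * ((k - w.1) - (d * w.1 - a * w.2 - k)) :=
      mul_nonneg (by linarith) (by linarith)
    rw [← hkey] at this
    have := nonneg_of_mul_nonneg_left this (by linarith)
    linarith)
  rw [hpre]
  refine hle.trans ?_
  have hsub : S ⊆ {w | k + δ ≤ w.1 ∧ k - δ ≤ d * w.1 - a * w.2 ∧ d * w.1 - a * w.2 < k} ∪
      {w | d * w.1 - a * w.2 = k} := by
    rintro w ⟨h1, h2, h3⟩
    rcases h3.lt_or_eq with h3 | h3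
    · exact Or.inl ⟨h1.le, h2.le, h3⟩
    · exact Or.inr h3
  refine (measureReal_mono hsub).trans ((measureReal_union_le _ _).trans ?_)
  rw [stdGaussianPlane_line h, add_zero]

/-- The strips on either side of the line `d * x - a * y = k`, cut by `x = k`. -/
lemma stdGaussianPlane_strip_le (ha : 0 < a) (hd : 0 < d) (h : a ^ 2 + d ^ 2 = 1)
    {k δ : ℝ} (hk : k ≤ 0) (hδ : 0 ≤ δ) :
    stdGaussianPlane.real
        {w | w.1 < k ∧ k ≤ d * w.1 - a * w.2 ∧ d * w.1 - a * w.2 < k + δ} ≤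
      stdGaussianPlane.real
        {w | k ≤ w.1 ∧ k - δ ≤ d * w.1 - a * w.2 ∧ d * w.1 - a * w.2 < k} := by
  have e1 := stdGaussianPlane_add
    (A := {w | w.1 < k ∧ k ≤ d * w.1 - a * w.2 ∧ d * w.1 - a * w.2 < k + δ})
    (B := {w | w.1 < k - δ ∧ k ≤ d * w.1 - a * w.2 ∧ d * w.1 - a * w.2 < k + δ})
    (C := {w | (k - δ ≤ w.1 ∧ w.1 < k) ∧ k ≤ d * w.1 - a * w.2 ∧ d * w.1 - a * w.2 < k + δ})
    (by measurability) (by clear * - hδ; intro w; simp only [Set.mem_ofPred_eq]; grind)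
    (by clear * - hδ; intro w; simp only [Set.mem_ofPred_eq]; grind)
  have e2 := stdGaussianPlane_add
    (A := {w | k ≤ w.1 ∧ k - δ ≤ d * w.1 - a * w.2 ∧ d * w.1 - a * w.2 < k})
    (B := {w | k + δ ≤ w.1 ∧ k - δ ≤ d * w.1 - a * w.2 ∧ d * w.1 - a * w.2 < k})
    (C := {w | (k ≤ w.1 ∧ w.1 < k + δ) ∧ k - δ ≤ d * w.1 - a * w.2 ∧ d * w.1 - a * w.2 < k})
    (by measurability) (by clear * - hδ; intro w; simp only [Set.mem_ofPred_eq]; grind)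
    (by clear * - hδ; intro w; simp only [Set.mem_ofPred_eq]; grind)
  have e3 := stdGaussianPlane_exchange h
    (S := {w | (k - δ ≤ w.1 ∧ w.1 < k) ∧ k ≤ d * w.1 - a * w.2 ∧ d * w.1 - a * w.2 < k + δ})
    (by measurability)
  have e4 : {w | exchangeReflection a d w ∈ {w : ℝ × ℝ | (k - δ ≤ w.1 ∧ w.1 < k) ∧
      k ≤ d * w.1 - a * w.2 ∧ d * w.1 - a * w.2 < k + δ}} =
      {w | (k ≤ w.1 ∧ w.1 < k + δ) ∧ k - δ ≤ d * w.1 - a * w.2 ∧ d * w.1 - a * w.2 < k} := by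
    ext w
    simp only [Set.mem_ofPred_eq, exchangeReflection_form h]
    rw [exchangeReflection_fst]
    tauto
  rw [e4] at e3
  rw [e1, e2]
  have := stdGaussianPlane_quadrant_strip_le ha hd h (δ := δ) hk
  linarith

set_option maxHeartbeats 1000000 in
/-- Inclusion-exclusion for the coverage event written in terms of the two linear forms. -/
lemma stdGaussianPlane_coverage (h : a ^ 2 + d ^ 2 = 1) {z α δ : ℝ}
    (hz : stdNormalCDF z = 1 - α / 2) (hz0 : 0 ≤ z) (hδ : 0 ≤ δ) :
    stdGaussianPlane.real {w | -z ≤ w.1 ∧ -z - δ ≤ d * w.1 - a * w.2 ∧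
        (w.1 ≤ z ∨ d * w.1 - a * w.2 ≤ z - δ)} =
      1 - α +
        (stdGaussianPlane.real
          {w | -z ≤ w.1 ∧ -z - δ ≤ d * w.1 - a * w.2 ∧ d * w.1 - a * w.2 < -z} -
        stdGaussianPlane.real
          {w | w.1 < -z ∧ -z ≤ d * w.1 - a * w.2 ∧ d * w.1 - a * w.2 < -z + δ}) := by
  have htail : stdGaussianPlane.real {w | w.1 < -z} = α / 2 := by
    have h1 := stdGaussianPlane_neg (S := {w | z < w.1}) (by measurability)
    have h2 := stdGaussianPlane_add (A := Set.univ) (B := {w | w.1 ≤ z}) (C := {w | z < w.1})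
      (by measurability) (by clear * -; grind) (by clear * -; grind)
    rw [probReal_univ, ← stdNormalCDF_eq_measure_halfPlane, hz] at h2
    simp only [Set.mem_ofPred_eq, Prod.fst_neg, lt_neg] at h1
    linarith
  have htail' : stdGaussianPlane.real {w | d * w.1 - a * w.2 < -z} = α / 2 := by
    rw [← htail, ← stdGaussianPlane_exchange h (S := {w | w.1 < -z}) (by measurability)]
    rfl
  have e1 := stdGaussianPlane_add
    (A := Set.univ)
    (B := {w | d * w.1 - a * w.2 < -z - δ})
    (C := {w | -z - δ ≤ d * w.1 - a * w.2})
    (by measurability) (by clear * - hδ; intro w; simp only [Set.mem_univ, Set.mem_ofPred_eq]; grind)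
    (by clear * - hδ; intro w; simp only [Set.mem_ofPred_eq]; grind)
  have e2 := stdGaussianPlane_add
    (A := {w | -z - δ ≤ d * w.1 - a * w.2})
    (B := {w | w.1 < -z ∧ -z - δ ≤ d * w.1 - a * w.2})
    (C := {w | -z ≤ w.1 ∧ -z - δ ≤ d * w.1 - a * w.2})
    (by measurability) (by clear * - hδ; intro w; simp only [Set.mem_ofPred_eq]; grind)
    (by clear * - hδ; intro w; simp only [Set.mem_ofPred_eq]; grind)
  have e3 := stdGaussianPlane_add
    (A := {w | -z ≤ w.1 ∧ -z - δ ≤ d * w.1 - a * w.2})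
    (B := {w | -z ≤ w.1 ∧ -z - δ ≤ d * w.1 - a * w.2 ∧ (w.1 ≤ z ∨ d * w.1 - a * w.2 ≤ z - δ)})
    (C := {w | z < w.1 ∧ z - δ < d * w.1 - a * w.2})
    (by measurability) (by clear * - hz0 hδ; intro w; simp only [Set.mem_ofPred_eq]; grind)
    (by clear * - hz0 hδ; intro w; simp only [Set.mem_ofPred_eq]; grind)
  have e4 := stdGaussianPlane_neg (S := {w | z < w.1 ∧ z - δ < d * w.1 - a * w.2})
    (by measurability)
  have e4' : {w : ℝ × ℝ | -w ∈ {w : ℝ × ℝ | z < w.1 ∧ z - δ < d * w.1 - a * w.2}} =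
      {w | w.1 < -z ∧ d * w.1 - a * w.2 < -z + δ} := by
    ext w
    simp only [Set.mem_ofPred_eq, Prod.fst_neg, Prod.snd_neg]
    grind
  rw [e4'] at e4
  have e5 := stdGaussianPlane_add
    (A := {w | w.1 < -z})
    (B := {w | w.1 < -z ∧ d * w.1 - a * w.2 < -z - δ})
    (C := {w | w.1 < -z ∧ -z - δ ≤ d * w.1 - a * w.2})
    (by measurability) (by clear * - hδ; intro w; simp only [Set.mem_ofPred_eq]; grind)
    (by clear * - hδ; intro w; simp only [Set.mem_ofPred_eq]; grind)
  have e6 := stdGaussianPlane_add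
    (A := {w | w.1 < -z ∧ d * w.1 - a * w.2 < -z + δ})
    (B := {w | w.1 < -z ∧ d * w.1 - a * w.2 < -z})
    (C := {w | w.1 < -z ∧ -z ≤ d * w.1 - a * w.2 ∧ d * w.1 - a * w.2 < -z + δ})
    (by measurability) (by clear * - hδ; intro w; simp only [Set.mem_ofPred_eq]; grind)
    (by clear * - hδ; intro w; simp only [Set.mem_ofPred_eq]; grind)
  have e7 := stdGaussianPlane_add
    (A := {w | w.1 < -z ∧ d * w.1 - a * w.2 < -z})
    (B := {w | w.1 < -z ∧ d * w.1 - a * w.2 < -z - δ})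
    (C := {w | w.1 < -z ∧ -z - δ ≤ d * w.1 - a * w.2 ∧ d * w.1 - a * w.2 < -z})
    (by measurability) (by clear * - hδ; intro w; simp only [Set.mem_ofPred_eq]; grind)
    (by clear * - hδ; intro w; simp only [Set.mem_ofPred_eq]; grind)
  have e8 := stdGaussianPlane_add
    (A := {w | d * w.1 - a * w.2 < -z})
    (B := {w | d * w.1 - a * w.2 < -z - δ})
    (C := {w | -z - δ ≤ d * w.1 - a * w.2 ∧ d * w.1 - a * w.2 < -z})
    (by measurability) (by clear * - hδ; intro w; simp only [Set.mem_ofPred_eq]; grind)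
    (by clear * - hδ; intro w; simp only [Set.mem_ofPred_eq]; grind)
  have e9 := stdGaussianPlane_add
    (A := {w | -z - δ ≤ d * w.1 - a * w.2 ∧ d * w.1 - a * w.2 < -z})
    (B := {w | w.1 < -z ∧ -z - δ ≤ d * w.1 - a * w.2 ∧ d * w.1 - a * w.2 < -z})
    (C := {w | -z ≤ w.1 ∧ -z - δ ≤ d * w.1 - a * w.2 ∧ d * w.1 - a * w.2 < -z})
    (by measurability) (by clear * - hδ; intro w; simp only [Set.mem_ofPred_eq]; grind)
    (by clear * - hδ; intro w; simp only [Set.mem_ofPred_eq]; grind)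
  rw [probReal_univ] at e1
  linarith

end

/-- Canonical finite-sample validity: for θ̂ ~ N(0, I₂) and b ≤ 0,
P(LB(θ̂₂) ≤ θ̂₁ ≤ UB(θ̂₂)) ≥ 1 − α, with equality when b = 0. -/
theorem stmt11 (a₁ a₂ b α z : ℝ)
    (ha₁ : 0 < a₁) (ha₂ : 0 < a₂) (ha : a₁ ^ 2 + a₂ ^ 2 = 1)
    (hb : b ≤ 0) (hα : α ∈ Set.Icc (0:ℝ) 1) (hz : stdNormalCDF z = 1 - α / 2) :
    1 - α ≤ (((gaussianReal 0 1).prod (gaussianReal 0 1))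
      {θ : ℝ × ℝ | max (a₁ * a₂⁻¹ * (θ.2 + a₂⁻¹ * b) - a₂⁻¹ * z) (-z) ≤ θ.1 ∧
        θ.1 ≤ max (a₁ * a₂⁻¹ * (θ.2 + a₂⁻¹ * b) + a₂⁻¹ * z) z}).toReal ∧
    (b = 0 → (((gaussianReal 0 1).prod (gaussianReal 0 1))
      {θ : ℝ × ℝ | max (a₁ * a₂⁻¹ * (θ.2 + a₂⁻¹ * b) - a₂⁻¹ * z) (-z) ≤ θ.1 ∧
        θ.1 ≤ max (a₁ * a₂⁻¹ * (θ.2 + a₂⁻¹ * b) + a₂⁻¹ * z) z}).toReal = 1 - α) := by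
  have hδ : 0 ≤ -(a₁ * a₂⁻¹ * b) := by
    have : 0 ≤ a₁ * a₂⁻¹ * -b := by have := neg_nonneg.mpr hb; positivity
    linarith
  have hz0 : 0 ≤ z := nonneg_of_half_le_stdNormalCDF (by linarith [hα.2])
  have hcov := stdGaussianPlane_coverage ha hz hz0 hδ
  have hle := stdGaussianPlane_strip_le ha₁ ha₂ ha (neg_nonpos.mpr hz0) hδ
  have hset : {θ : ℝ × ℝ | max (a₁ * a₂⁻¹ * (θ.2 + a₂⁻¹ * b) - a₂⁻¹ * z) (-z) ≤ θ.1 ∧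
        θ.1 ≤ max (a₁ * a₂⁻¹ * (θ.2 + a₂⁻¹ * b) + a₂⁻¹ * z) z} =
      {w | -z ≤ w.1 ∧ -z - -(a₁ * a₂⁻¹ * b) ≤ a₂ * w.1 - a₁ * w.2 ∧
        (w.1 ≤ z ∨ a₂ * w.1 - a₁ * w.2 ≤ z - -(a₁ * a₂⁻¹ * b))} := by
    ext w
    have hmul : ∀ s : ℝ, a₁ * a₂⁻¹ * (w.2 + a₂⁻¹ * b) + a₂⁻¹ * s =
        (a₁ * w.2 + a₁ * a₂⁻¹ * b + s) / a₂ := fun s => by field_simp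
    have hlow := hmul (-z)
    rw [mul_neg, ← sub_eq_add_neg] at hlow
    simp only [Set.mem_ofPred_eq, max_le_iff, le_max_iff, hlow, hmul z, div_le_iff₀ ha₂,
      le_div_iff₀ ha₂]
    grind
  rw [hset]
  change 1 - α ≤ stdGaussianPlane.real _ ∧ (b = 0 → stdGaussianPlane.real _ = 1 - α)
  rw [hcov]
  refine ⟨by linarith, ?_⟩
  rintro rfl
  have hempty₁ : {w : ℝ × ℝ | -z ≤ w.1 ∧ -z - -(a₁ * a₂⁻¹ * 0) ≤ a₂ * w.1 - a₁ * w.2 ∧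
      a₂ * w.1 - a₁ * w.2 < -z} = ∅ := by
    ext w
    grind
  have hempty₂ : {w : ℝ × ℝ | w.1 < -z ∧ -z ≤ a₂ * w.1 - a₁ * w.2 ∧
      a₂ * w.1 - a₁ * w.2 < -z + -(a₁ * a₂⁻¹ * 0)} = ∅ := by
    ext w
    grind
  rw [hempty₁, hempty₂]
  simp
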